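/- For all real numbers p, q and every natural number m, ∫₀^{2π} exp(p·cos x + q·sin x)·cos(q·cos x − p·sin x + m·x) dx = (2π/m!)·(√(p² + q²))^m·cos(m·arg(p + i·q)). (This corrects Gradshteyn–Ryzhik Eq. 3.937 4, whose stated answer with atan(q/p) has the wrong sign when m is odd and p < 0.) -/

import Mathlib

open scoped Real

lemma aux_int (k : ℤ) : (∫ x : ℝ in (0:ℝ)..(2 * π), Complex.exp ((k * Complex.I) * x)) =
    if k = 0 then (2 * π : ℂ) else 0 := by
  split_ifs with h
  · simp [h]
  · have hc : (k : ℂ) * Complex.I ≠ 0 := by simp [h]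
    rw [integral_exp_mul_complex hc]
    have : Complex.exp (k * Complex.I * ((2 * π : ℝ) : ℂ)) = 1 := by
      rw [Complex.exp_eq_one_iff]
      exact ⟨k, by push_cast; ring⟩
    rw [this]; simp

lemma aux_main (w : ℂ) (m : ℕ) :
    (∫ x : ℝ in (0:ℝ)..(2 * π),
      Complex.exp (w * Complex.exp (-(x * Complex.I)) + m * x * Complex.I)) =
      2 * π * (w ^ m / m.factorial) := by
  have key := intervalIntegral.hasSum_integral_of_dominated_convergence
    (μ := MeasureTheory.volume) (a := 0) (b := 2 * π)
    (F := fun (n : ℕ) (x : ℝ) =>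
      w ^ n / n.factorial * Complex.exp ((((m : ℤ) - (n : ℤ) : ℤ) * Complex.I) * x))
    (f := fun x : ℝ => Complex.exp (w * Complex.exp (-(x * Complex.I)) + m * x * Complex.I))
    (fun n _ => ‖w‖ ^ n / n.factorial)
    (fun n => (Continuous.aestronglyMeasurable (by fun_prop)))
    (fun n => Filter.Eventually.of_forall fun x _ => by
      have : ((((m : ℤ) - (n : ℤ) : ℤ) : ℂ) * Complex.I) * x
        = (((m - n : ℝ) * x : ℝ) : ℂ) * Complex.I := by push_cast; ring
      rw [this, norm_mul, Complex.norm_exp_ofReal_mul_I]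
      simp)
    (Filter.Eventually.of_forall fun x _ => Real.summable_pow_div_factorial _)
    (by simp)
    (Filter.Eventually.of_forall fun x _ => by
      have h := (NormedSpace.expSeries_div_hasSum_exp
        (w * Complex.exp (-(x * Complex.I)))).mul_right (Complex.exp (m * x * Complex.I))
      rw [← Complex.exp_eq_exp_ℂ, ← Complex.exp_add] at h
      refine Eq.mp (congrArg (fun g : ℕ → ℂ => HasSum g _) (funext fun n => ?_)) h
      symm
      rw [mul_pow, ← Complex.exp_nat_mul, mul_div_right_comm, mul_assoc (w ^ n / _) (Complex.exp _), ← Complex.exp_add]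
      congr 2
      push_cast; ring)
  simp only [intervalIntegral.integral_const_mul, aux_int] at key
  refine key.unique ?_
  convert hasSum_single m ?_ using 1
  · simp [mul_comm]
  · intro n hn
    rw [if_neg (by omega), mul_zero]

theorem gr_3937_4_corrected (p q : ℝ) (m : ℕ) :
    (∫ x : ℝ in (0:ℝ)..(2 * π),
        Real.exp (p * Real.cos x + q * Real.sin x) *
          Real.cos (q * Real.cos x - p * Real.sin x + m * x)) =
      2 * π / (m.factorial : ℝ) * (Real.sqrt (p ^ 2 + q ^ 2)) ^ m *
        Real.cos (m * Complex.arg (p + Complex.I * q)) := by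
  set w : ℂ := p + Complex.I * q with hw
  have hn : Real.sqrt (p ^ 2 + q ^ 2) = ‖w‖ := by
    rw [hw, mul_comm, Complex.norm_add_mul_I]
  have h := congrArg Complex.re (aux_main w m)
  have hpow : w ^ m = ((‖w‖ ^ m : ℝ) : ℂ) * Complex.exp (((m * Complex.arg w : ℝ) : ℂ) * Complex.I) := by
    conv_lhs => rw [← Complex.norm_mul_exp_arg_mul_I w]
    rw [mul_pow, ← Complex.exp_nat_mul]
    push_cast; ring_nf
  have hR : (2 * π * (w ^ m / m.factorial) : ℂ) =
      ((2 * π / (m.factorial : ℝ) * ‖w‖ ^ m : ℝ) : ℂ) *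
        Complex.exp (((m * Complex.arg w : ℝ) : ℂ) * Complex.I) := by
    rw [hpow]; push_cast; ring
  rw [hR, Complex.re_ofReal_mul, Complex.exp_ofReal_mul_I_re] at h
  rw [hn, ← h]
  have hi : IntervalIntegrable (fun x : ℝ =>
      Complex.exp (w * Complex.exp (-(x * Complex.I)) + m * x * Complex.I))
      MeasureTheory.volume 0 (2 * π) := Continuous.intervalIntegrable (by fun_prop) _ _
  have h2 := Complex.reCLM.intervalIntegral_comp_comm hi
  simp only [Complex.reCLM_apply] at h2
  rw [← h2]
  congr 1
  ext x
  have e : w * Complex.exp (-(x * Complex.I)) + m * x * Complex.I =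
      ((p * Real.cos x + q * Real.sin x : ℝ) : ℂ) +
      ((q * Real.cos x - p * Real.sin x + m * x : ℝ) : ℂ) * Complex.I := by
    rw [← neg_mul, Complex.exp_mul_I, Complex.cos_neg, Complex.sin_neg, hw]
    push_cast
    linear_combination (-(q : ℂ) * Complex.sin x) * Complex.I_sq
  rw [e, Complex.exp_add, ← Complex.ofReal_exp, Complex.re_ofReal_mul,
    Complex.exp_ofReal_mul_I_re]
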